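/- arXiv:1902.07137 — 2 statements merged into one kernel-verified Lean document; each statement's English description precedes it below -/
import Mathlib

section
/- (Cluster characterization, necessary condition.) Let x* = (x_1*,…,x_n*) be the minimizer of the sum-of-norms clustering objective with parameter λ > 0, and let C be a nonempty subset of {1,…,n}. If there exists x̂ ∈ ℝ^d such that x_i* = x̂ for all i ∈ C and x_i* ≠ x̂ for all i ∉ C (i.e., C is exactly one cluster), then there exist vectors z_ij* ∈ ℝ^d for i, j ∈ C with i ≠ j such that: a_i − (1/|C|)·Σ_{l∈C} a_l = λ·Σ_{j∈C∖{i}} z_ij* for all i ∈ C; ‖z_ij*‖ ≤ 1 for all i ≠ j in C; and z_ij* = −z_ji* for all i ≠ j in C. -/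
open Finset

/-- The sum-of-norms clustering objective. -/
noncomputable def sonObjective {d n : ℕ} (a : Fin n → EuclideanSpace ℝ (Fin d)) (lam : ℝ)
    (x : Fin n → EuclideanSpace ℝ (Fin d)) : ℝ :=
  (1 / 2) * ∑ i, ‖x i - a i‖ ^ 2 + lam * ∑ i, ∑ j, if i < j then ‖x i - x j‖ else 0

lemma son_self_neg {E : Type*} [NormedAddCommGroup E] [InnerProductSpace ℝ E] {w : E}
    (hw : w = -w) : w = 0 := by
  have h2 : (2 : ℝ) • w = 0 := by
    rw [two_smul]; nth_rewrite 1 [hw]; exact neg_add_cancel _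
  exact (smul_eq_zero.mp h2).resolve_left two_ne_zero

lemma son_norm_bound {E : Type*} [NormedAddCommGroup E] [InnerProductSpace ℝ E] [DecidableEq E] (u v : E) (t : ℝ)
    (ht : 0 < t) :
    ‖u + t • v‖ ≤ ‖u‖ + t * inner ℝ (if u = 0 then ‖v‖⁻¹ • v else ‖u‖⁻¹ • u) v
      + t ^ 2 * (‖v‖ ^ 2 / (2 * ‖u‖)) := by
  by_cases hu : u = 0
  · subst hu
    simp only [zero_add, norm_smul, Real.norm_eq_abs, abs_of_pos ht, if_true, norm_zero, mul_zero,
      div_zero, add_zero, inner_smul_left, real_inner_self_eq_norm_sq]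
    by_cases hv : ‖v‖ = 0
    · simp [hv]
    · simp only [conj_trivial]
      apply le_of_eq
      field_simp
  · have hn : 0 < ‖u‖ := norm_pos_iff.mpr hu
    simp only [hu, if_false, inner_smul_left, conj_trivial]
    have h1 : ‖u + t • v‖ ^ 2 = ‖u‖ ^ 2 + 2 * (t * inner ℝ u v) + t ^ 2 * ‖v‖ ^ 2 := by
      rw [norm_add_sq_real, inner_smul_right, norm_smul, Real.norm_eq_abs, mul_pow, sq_abs]
    have h2 : ‖u‖ + t * (‖u‖⁻¹ * inner ℝ u v) + t ^ 2 * (‖v‖ ^ 2 / (2 * ‖u‖))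
        = (‖u‖ ^ 2 + ‖u + t • v‖ ^ 2) / (2 * ‖u‖) := by
      rw [h1]; field_simp; ring
    rw [h2, le_div_iff₀ (by positivity)]
    nlinarith [sq_nonneg (‖u‖ - ‖u + t • v‖)]

lemma son_sum_pairs {E : Type*} [NormedAddCommGroup E] [InnerProductSpace ℝ E] {n : ℕ}
    (z : Fin n → Fin n → E) (hz : ∀ i j, z i j = - z j i) (h : Fin n → E) :
    (∑ i, ∑ j, if i < j then (inner ℝ (z i j) (h i - h j) : ℝ) else 0)
      = ∑ i, inner ℝ (∑ j, z i j) (h i) := by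
  have h1 : (∑ i, ∑ j, if i < j then (inner ℝ (z i j) (h i - h j) : ℝ) else 0)
      = (∑ i, ∑ j, if i < j then (inner ℝ (z i j) (h i) : ℝ) else 0)
        + ∑ i, ∑ j, if i < j then (inner ℝ (z j i) (h j) : ℝ) else 0 := by
    simp only [← Finset.sum_add_distrib]
    refine Finset.sum_congr rfl fun i _ => Finset.sum_congr rfl fun j _ => ?_
    split_ifs
    · rw [inner_sub_right, hz j i, inner_neg_left]; ring
    · simp
  rw [h1, Finset.sum_comm (f := fun i j => if i < j then (inner ℝ (z j i) (h j) : ℝ) else 0)]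
  simp only [← Finset.sum_add_distrib, sum_inner]
  refine Finset.sum_congr rfl fun i _ => Finset.sum_congr rfl fun j _ => ?_
  rcases lt_trichotomy i j with hij | hij | hij
  · simp [hij, hij.not_gt]
  · subst hij
    have : z i i = 0 := by
      have h2 : (2 : ℝ) • z i i = 0 := by
        rw [two_smul]; nth_rewrite 1 [hz i i]; exact neg_add_cancel _
      exact (smul_eq_zero.mp h2).resolve_left two_ne_zero
    simp [this]
  · simp [hij, hij.not_gt]

lemma son_dir {d n : ℕ} (a : Fin n → EuclideanSpace ℝ (Fin d)) (lam : ℝ) (hlam : 0 < lam)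
    (x : Fin n → EuclideanSpace ℝ (Fin d))
    (hx : ∀ y : Fin n → EuclideanSpace ℝ (Fin d), sonObjective a lam x ≤ sonObjective a lam y)
    (h : Fin n → EuclideanSpace ℝ (Fin d)) :
    0 ≤ (∑ i, inner ℝ (x i - a i) (h i)) + lam * ∑ i, ∑ j, if i < j then
      (inner ℝ (if x i - x j = 0 then ‖h i - h j‖⁻¹ • (h i - h j)
        else ‖x i - x j‖⁻¹ • (x i - x j)) (h i - h j) : ℝ) else 0 := by
  set S : ℝ := ∑ i, ∑ j, if i < j then
      (inner ℝ (if x i - x j = 0 then ‖h i - h j‖⁻¹ • (h i - h j)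
        else ‖x i - x j‖⁻¹ • (x i - x j)) (h i - h j) : ℝ) else 0 with hS
  set Q : ℝ := ∑ i, ∑ j, if i < j then ‖h i - h j‖ ^ 2 / (2 * ‖x i - x j‖) else 0 with hQ
  set N : ℝ := ∑ i, ∑ j, if i < j then ‖x i - x j‖ else 0 with hN
  set A : ℝ := ∑ i, inner ℝ (x i - a i) (h i) with hA
  set R : ℝ := ∑ i, ‖h i‖ ^ 2 with hR
  have key : ∀ t : ℝ, 0 < t → 0 ≤ t * (A + lam * S) + t ^ 2 * (R / 2 + lam * Q) := by
    intro t ht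
    have h0 := hx (fun i => x i + t • h i)
    unfold sonObjective at h0
    have e1 : ∑ i, ‖x i + t • h i - a i‖ ^ 2
        = ∑ i, ‖x i - a i‖ ^ 2 + 2 * t * A + t ^ 2 * R := by
      rw [hA, hR, Finset.mul_sum, Finset.mul_sum, ← Finset.sum_add_distrib,
        ← Finset.sum_add_distrib]
      refine Finset.sum_congr rfl fun i _ => ?_
      rw [show x i + t • h i - a i = (x i - a i) + t • h i by abel, norm_add_sq_real,
        inner_smul_right, norm_smul, Real.norm_eq_abs, mul_pow, sq_abs]
      ring
    have e2 : (∑ i, ∑ j, if i < j then ‖x i + t • h i - (x j + t • h j)‖ else 0)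
        ≤ N + t * S + t ^ 2 * Q := by
      rw [hN, hS, hQ]
      simp only [Finset.mul_sum, ← Finset.sum_add_distrib]
      refine Finset.sum_le_sum fun i _ => Finset.sum_le_sum fun j _ => ?_
      split_ifs with h1 h2
      · have := son_norm_bound (x i - x j) (h i - h j) t ht
        rw [if_pos h2] at this
        rwa [show x i + t • h i - (x j + t • h j) = (x i - x j) + t • (h i - h j) by
          rw [smul_sub]; abel]
      · have := son_norm_bound (x i - x j) (h i - h j) t ht
        rw [if_neg h2] at this
        rwa [show x i + t • h i - (x j + t • h j) = (x i - x j) + t • (h i - h j) by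
          rw [smul_sub]; abel]
      · simp
    rw [e1] at h0
    have e3 := mul_le_mul_of_nonneg_left e2 hlam.le
    nlinarith
  by_contra hneg
  push Not at hneg
  set P := A + lam * S
  set B := R / 2 + lam * Q
  have hBp : 0 < |B| + 1 := by positivity
  have h1 := key (-P / (2 * (|B| + 1))) (by apply div_pos <;> linarith)
  set t := -P / (2 * (|B| + 1)) with htd
  have ht : 0 < t := by apply div_pos <;> linarith
  have hP : P = -(2 * t * (|B| + 1)) := by rw [htd]; field_simp
  rw [hP] at h1
  have h3 : t ^ 2 * B ≤ t ^ 2 * |B| := mul_le_mul_of_nonneg_left (le_abs_self B) (by positivity)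
  have h4 : 0 ≤ t ^ 2 * |B| := by positivity
  have h5 : 0 < t ^ 2 := by positivity
  nlinarith

lemma son_opt {d n : ℕ} (a : Fin n → EuclideanSpace ℝ (Fin d)) (lam : ℝ) (hlam : 0 < lam)
    (x : Fin n → EuclideanSpace ℝ (Fin d))
    (hx : ∀ y : Fin n → EuclideanSpace ℝ (Fin d), sonObjective a lam x ≤ sonObjective a lam y) :
    ∃ z : Fin n → Fin n → EuclideanSpace ℝ (Fin d),
      (∀ i j, z i j = - z j i) ∧ (∀ i j, ‖z i j‖ ≤ 1) ∧
      (∀ i j, x i - x j ≠ 0 → z i j = ‖x i - x j‖⁻¹ • (x i - x j)) ∧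
      ∀ i, a i - x i = lam • ∑ j, z i j := by
  set Z : Set (Fin n → Fin n → EuclideanSpace ℝ (Fin d)) :=
    {z | (∀ i j, z i j = - z j i) ∧ (∀ i j, ‖z i j‖ ≤ 1) ∧
      (∀ i j, x i - x j ≠ 0 → z i j = ‖x i - x j‖⁻¹ • (x i - x j))} with hZ
  let L : (Fin n → Fin n → EuclideanSpace ℝ (Fin d)) →ₗ[ℝ] (Fin n → EuclideanSpace ℝ (Fin d)) :=
    { toFun := fun z i => lam • ∑ j, z i j
      map_add' := by intro z w; ext1 i; simp [Finset.sum_add_distrib]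
      map_smul' := by
        intro c z; ext1 i
        simp only [Pi.smul_apply, RingHom.id_apply, ← Finset.smul_sum]
        rw [smul_comm] }
  have hLc : Continuous L := by
    change Continuous (fun (z : Fin n → Fin n → EuclideanSpace ℝ (Fin d)) i => lam • ∑ j, z i j)
    fun_prop
  have hconv : Convex ℝ Z := by
    rintro z ⟨z1, z2, z3⟩ w ⟨w1, w2, w3⟩ s t hs ht hst
    refine ⟨fun i j => ?_, fun i j => ?_, fun i j hij => ?_⟩
    · simp only [Pi.add_apply, Pi.smul_apply]
      rw [z1 i j, w1 i j]; simp; abel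
    · simp only [Pi.add_apply, Pi.smul_apply]
      refine (norm_add_le _ _).trans ?_
      rw [norm_smul, norm_smul, Real.norm_of_nonneg hs, Real.norm_of_nonneg ht]
      nlinarith [z2 i j, w2 i j]
    · simp only [Pi.add_apply, Pi.smul_apply]
      rw [z3 i j hij, w3 i j hij, ← add_smul, hst, one_smul]
  have hclosed : IsClosed Z := by
    have : Z = {z | ∀ i j, z i j = - z j i} ∩ ({z | ∀ i j, ‖z i j‖ ≤ 1} ∩
      {z | ∀ i j, x i - x j ≠ 0 → z i j = ‖x i - x j‖⁻¹ • (x i - x j)}) := rfl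
    rw [this]
    simp only [Set.ofPred_forall]
    refine IsClosed.inter ?_ (IsClosed.inter ?_ ?_)
    · exact isClosed_iInter fun i => isClosed_iInter fun j =>
        isClosed_eq (by fun_prop) (by fun_prop)
    · exact isClosed_iInter fun i => isClosed_iInter fun j =>
        isClosed_le (by fun_prop) (by fun_prop)
    · exact isClosed_iInter fun i => isClosed_iInter fun j => isClosed_iInter fun _ =>
        isClosed_eq (by fun_prop) (by fun_prop)
  have hcomp : IsCompact Z := by
    refine (isCompact_closedBall (0 : Fin n → Fin n → EuclideanSpace ℝ (Fin d)) 1).of_isClosed_subset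
      hclosed ?_
    rintro z ⟨-, z2, -⟩
    rw [mem_closedBall_zero_iff, pi_norm_le_iff_of_nonneg zero_le_one]
    intro i
    rw [pi_norm_le_iff_of_nonneg zero_le_one]
    exact z2 i
  by_cases hg : (fun i => a i - x i) ∈ L '' Z
  · obtain ⟨z, ⟨z1, z2, z3⟩, hz⟩ := hg
    exact ⟨z, z1, z2, z3, fun i => (congrFun hz i).symm⟩
  exfalso
  obtain ⟨f, u, hf1, hf2⟩ := geometric_hahn_banach_closed_point (hconv.linear_image L)
    (hcomp.image hLc).isClosed hg
  obtain ⟨h, hh⟩ : ∃ h : Fin n → EuclideanSpace ℝ (Fin d), ∀ v, f v = ∑ i, inner ℝ (v i) (h i) := by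
    refine ⟨fun i => (InnerProductSpace.toDual ℝ _).symm
      (f.comp (ContinuousLinearMap.single ℝ (fun _ : Fin n => EuclideanSpace ℝ (Fin d)) i)), ?_⟩
    intro v
    conv_lhs => rw [← Finset.univ_sum_single v, map_sum]
    refine Finset.sum_congr rfl fun i _ => ?_
    rw [real_inner_comm, InnerProductSpace.toDual_symm_apply]
    simp
  set z : Fin n → Fin n → EuclideanSpace ℝ (Fin d) := fun i j =>
    if x i - x j = 0 then ‖h i - h j‖⁻¹ • (h i - h j) else ‖x i - x j‖⁻¹ • (x i - x j) with hzd
  have hun : ∀ w : EuclideanSpace ℝ (Fin d), ‖‖w‖⁻¹ • w‖ ≤ 1 := by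
    intro w
    rw [norm_smul, norm_inv, norm_norm]
    exact inv_mul_le_one
  have hz1 : ∀ i j, z i j = - z j i := by
    intro i j
    simp only [hzd]
    rw [← neg_sub (x i) (x j), ← neg_sub (h i) (h j)]
    simp only [neg_eq_zero, norm_neg, smul_neg]
    split_ifs <;> simp
  have hzZ : z ∈ Z := by
    refine ⟨hz1, fun i j => ?_, fun i j hij => ?_⟩
    · simp only [hzd]; split_ifs <;> exact hun _
    · simp only [hzd]; rw [if_neg hij]
  have h1 := hf1 (L z) ⟨z, hzZ, rfl⟩
  have h2 := son_dir a lam hlam x hx h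
  have h3 := son_sum_pairs z hz1 h
  simp only [hzd] at h3
  rw [h3] at h2
  have h4 : f (L z) = lam * ∑ i, inner ℝ (∑ j, z i j) (h i) := by
    rw [hh, Finset.mul_sum]
    refine Finset.sum_congr rfl fun i _ => ?_
    change inner ℝ (lam • ∑ j, z i j) (h i) = _
    rw [real_inner_smul_left]
  have h5 : f (fun i => a i - x i) = - ∑ i, inner ℝ (x i - a i) (h i) := by
    rw [hh, ← Finset.sum_neg_distrib]
    refine Finset.sum_congr rfl fun i _ => ?_
    rw [← inner_neg_left, neg_sub]
  simp only [hzd] at h4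
  rw [← h4] at h2
  simp only [hzd] at h1
  linarith

/-- Cluster characterization, necessary condition (Chiquet et al.): if `C` is exactly
one cluster of the minimizer, then the multiplier system is solvable. -/
theorem cluster_characterization_necessary
    (d n : ℕ) (a : Fin n → EuclideanSpace ℝ (Fin d)) (lam : ℝ) (hlam : 0 < lam)
    (x : Fin n → EuclideanSpace ℝ (Fin d))
    (hx : ∀ y : Fin n → EuclideanSpace ℝ (Fin d), sonObjective a lam x ≤ sonObjective a lam y)
    (C : Finset (Fin n)) (hC : C.Nonempty) (xhat : EuclideanSpace ℝ (Fin d))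
    (hin : ∀ i ∈ C, x i = xhat) (hout : ∀ i ∉ C, x i ≠ xhat) :
    ∃ z : Fin n → Fin n → EuclideanSpace ℝ (Fin d),
      (∀ i ∈ C, a i - (C.card : ℝ)⁻¹ • ∑ l ∈ C, a l = lam • ∑ j ∈ C.erase i, z i j) ∧
      (∀ i ∈ C, ∀ j ∈ C, i ≠ j → ‖z i j‖ ≤ 1) ∧
      (∀ i ∈ C, ∀ j ∈ C, i ≠ j → z i j = -z j i) := by
  obtain ⟨z, z1, z2, z3, z4⟩ := son_opt a lam hlam x hx
  refine ⟨z, ?_, fun i _ j _ _ => z2 i j, fun i _ j _ _ => z1 i j⟩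
  set U : EuclideanSpace ℝ (Fin d) := ∑ j ∈ Cᶜ, ‖xhat - x j‖⁻¹ • (xhat - x j) with hU
  have key : ∀ i ∈ C, a i = xhat + lam • U + lam • ∑ j ∈ C, z i j := by
    intro i hi
    have h1 := z4 i
    rw [← Finset.sum_add_sum_compl C, hin i hi] at h1
    have h2 : ∑ j ∈ Cᶜ, z i j = U := by
      refine Finset.sum_congr rfl fun j hj => ?_
      have hj' : j ∉ C := Finset.mem_compl.mp hj
      rw [z3 i j, hin i hi]
      rw [hin i hi, sub_ne_zero]
      exact (hout j hj').symm
    rw [h2, smul_add] at h1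
    rw [sub_eq_iff_eq_add.mp h1]; abel
  have hzero : ∑ i ∈ C, ∑ j ∈ C, z i j = 0 := by
    have : ∑ i ∈ C, ∑ j ∈ C, z i j = - ∑ i ∈ C, ∑ j ∈ C, z i j := by
      conv_lhs => rw [Finset.sum_comm]
      simp only [← Finset.sum_neg_distrib]
      exact Finset.sum_congr rfl fun i _ => Finset.sum_congr rfl fun j _ => z1 j i
    exact son_self_neg this
  have hcard : (C.card : ℝ) ≠ 0 := by exact_mod_cast hC.card_ne_zero
  have hmean : (C.card : ℝ)⁻¹ • ∑ l ∈ C, a l = xhat + lam • U := by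
    rw [Finset.sum_congr rfl key, Finset.sum_add_distrib, ← Finset.smul_sum, hzero, smul_zero,
      add_zero, Finset.sum_const, ← Nat.cast_smul_eq_nsmul ℝ, smul_smul, inv_mul_cancel₀ hcard,
      one_smul]
  intro i hi
  have hii : z i i = 0 := son_self_neg (z1 i i)
  rw [hmean, Finset.sum_erase C hii, key i hi]
  abel
end

section
/- (Agglomeration property.) Let 0 < λ ≤ λ̄, let x* be the minimizer of the sum-of-norms clustering objective with parameter λ, and let x̄* be the minimizer with parameter λ̄. If C ⊆ {1,…,n} and x̂ ∈ ℝ^d satisfy x_i* = x̂ for all i ∈ C and x_i* ≠ x̂ for all i ∉ C (i.e., C is exactly one cluster at parameter λ), then there exists x̂′ ∈ ℝ^d such that x̄_i* = x̂′ for all i ∈ C (i.e., the points of C remain together in one cluster at parameter λ̄). -/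
open Finset

section helpers

variable {E : Type*} [NormedAddCommGroup E] [InnerProductSpace ℝ E]

lemma son_symm_sum {n : ℕ} (g : Fin n → Fin n → ℝ) (hs : ∀ i j, g i j = g j i)
    (h0 : ∀ i, g i i = 0) :
    (∑ i, ∑ j, if i < j then g i j else 0) = (1 / 2) * ∑ i, ∑ j, g i j := by
  have h1 : ∀ i j, g i j = (if i < j then g i j else 0) + (if j < i then g j i else 0) := by
    intro i j
    rcases lt_trichotomy i j with h | h | h
    · simp [h, h.not_gt]
    · subst h; simp [h0]
    · simp [h, h.not_gt, hs i j]
  have h2 : ∑ i, ∑ j, g i j = (∑ i, ∑ j, if i < j then g i j else 0)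
      + ∑ i, ∑ j, if j < i then g j i else 0 := by
    rw [← Finset.sum_add_distrib]
    refine Finset.sum_congr rfl fun i _ => ?_
    rw [← Finset.sum_add_distrib]
    exact Finset.sum_congr rfl fun j _ => h1 i j
  have h3 : (∑ i, ∑ j, if j < i then g j i else 0) = ∑ i, ∑ j, if i < j then g i j else 0 :=
    Finset.sum_comm
  rw [h2, h3]; ring

/-- The part of the objective that depends on the points of `C`. -/
noncomputable def sonPart {n : ℕ} (C : Finset (Fin n)) (a : Fin n → E) (lam : ℝ)
    (x p : Fin n → E) : ℝ :=
  (1 / 2) * ∑ i ∈ C, ‖p i - a i‖ ^ 2 + lam * ((1 / 2) * ∑ i ∈ C, ∑ j ∈ C, ‖p i - p j‖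
    + ∑ j ∈ Cᶜ, ∑ i ∈ C, ‖p i - x j‖)

lemma son_decomp {d n : ℕ} (C : Finset (Fin n)) (a : Fin n → EuclideanSpace ℝ (Fin d)) (lam : ℝ)
    (x p : Fin n → EuclideanSpace ℝ (Fin d)) :
    sonObjective a lam (C.piecewise p x) = sonPart C a lam x p
      + ((1 / 2) * ∑ i ∈ Cᶜ, ‖x i - a i‖ ^ 2
        + lam * ((1 / 2) * ∑ i ∈ Cᶜ, ∑ j ∈ Cᶜ, ‖x i - x j‖)) := by
  unfold sonObjective sonPart
  rw [son_symm_sum (fun i j => ‖C.piecewise p x i - C.piecewise p x j‖)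
    (fun i j => norm_sub_rev _ _) (fun i => by simp)]
  have e1 : ∀ i ∈ C, C.piecewise p x i = p i := fun i hi => Finset.piecewise_eq_of_mem _ _ _ hi
  have e2 : ∀ i ∈ Cᶜ, C.piecewise p x i = x i := fun i hi =>
    Finset.piecewise_eq_of_notMem _ _ _ (Finset.mem_compl.1 hi)
  have key : ∀ g : Fin n → ℝ, ∑ i, g i = ∑ i ∈ C, g i + ∑ i ∈ Cᶜ, g i := fun g =>
    (Finset.sum_add_sum_compl C g).symm
  have s1 : ∑ i, ‖C.piecewise p x i - a i‖ ^ 2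
      = ∑ i ∈ C, ‖p i - a i‖ ^ 2 + ∑ i ∈ Cᶜ, ‖x i - a i‖ ^ 2 := by
    rw [key]
    congr 1
    · exact Finset.sum_congr rfl fun i hi => by rw [e1 i hi]
    · exact Finset.sum_congr rfl fun i hi => by rw [e2 i hi]
  have s2 : ∑ i, ∑ j, ‖C.piecewise p x i - C.piecewise p x j‖
      = (∑ i ∈ C, ∑ j ∈ C, ‖p i - p j‖ + ∑ j ∈ Cᶜ, ∑ i ∈ C, ‖p i - x j‖)
        + (∑ j ∈ Cᶜ, ∑ i ∈ C, ‖p i - x j‖ + ∑ i ∈ Cᶜ, ∑ j ∈ Cᶜ, ‖x i - x j‖) := by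
    rw [key]
    congr 1
    · rw [Finset.sum_comm (s := Cᶜ) (t := C), ← Finset.sum_add_distrib]
      refine Finset.sum_congr rfl fun i hi => ?_
      rw [key]
      congr 1
      · exact Finset.sum_congr rfl fun j hj => by rw [e1 i hi, e1 j hj]
      · exact Finset.sum_congr rfl fun j hj => by rw [e1 i hi, e2 j hj]
    · rw [← Finset.sum_add_distrib]
      refine Finset.sum_congr rfl fun i hi => ?_
      rw [key]
      congr 1
      · exact Finset.sum_congr rfl fun j hj => by rw [e2 i hi, e1 j hj, norm_sub_rev]
      · exact Finset.sum_congr rfl fun j hj => by rw [e2 i hi, e2 j hj]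
  rw [s1, s2]; ring

lemma sonPart_min {d n : ℕ} (C : Finset (Fin n)) (a : Fin n → EuclideanSpace ℝ (Fin d)) (lam : ℝ)
    (x p : Fin n → EuclideanSpace ℝ (Fin d))
    (hx : ∀ y : Fin n → EuclideanSpace ℝ (Fin d), sonObjective a lam x ≤ sonObjective a lam y) :
    sonPart C a lam x x ≤ sonPart C a lam x p := by
  have h := hx (C.piecewise p x)
  have h1 := son_decomp C a lam x x
  rw [Finset.piecewise_same] at h1
  rw [h1, son_decomp C a lam x p] at h
  linarith

lemma norm_add_smul_le (v y : E) (t : ℝ) (hv : v ≠ 0) :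
    ‖v + t • y‖ ≤ ‖v‖ + t * (inner ℝ v y / ‖v‖) + t ^ 2 * (‖y‖ ^ 2 / (2 * ‖v‖)) := by
  have hv' : 0 < ‖v‖ := norm_pos_iff.2 hv
  have h1 : ‖v + t • y‖ ^ 2 = ‖v‖ ^ 2 + 2 * (t * inner ℝ v y) + t ^ 2 * ‖y‖ ^ 2 := by
    rw [norm_add_sq_real, inner_smul_right, norm_smul, mul_pow, Real.norm_eq_abs, sq_abs]
  have h2 : ‖v‖ + t * (inner ℝ v y / ‖v‖) + t ^ 2 * (‖y‖ ^ 2 / (2 * ‖v‖))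
      = (‖v‖ ^ 2 + ‖v + t • y‖ ^ 2) / (2 * ‖v‖) := by
    rw [h1]; field_simp; ring
  rw [h2, le_div_iff₀ (by positivity)]
  nlinarith [sq_nonneg (‖v‖ - ‖v + t • y‖)]

lemma son_quad {n : ℕ} (C : Finset (Fin n)) (a y : Fin n → E) (c : E) (t : ℝ)
    (hy : ∑ i ∈ C, y i = 0) :
    ∑ i ∈ C, ‖c + t • y i - a i‖ ^ 2 = ∑ i ∈ C, ‖c - a i‖ ^ 2
      - 2 * t * ∑ i ∈ C, inner ℝ (a i) (y i) + t ^ 2 * ∑ i ∈ C, ‖y i‖ ^ 2 := by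
  have h : ∀ i ∈ C, ‖c + t • y i - a i‖ ^ 2 = ‖c - a i‖ ^ 2 + 2 * t * inner ℝ c (y i)
      - 2 * t * inner ℝ (a i) (y i) + t ^ 2 * ‖y i‖ ^ 2 := by
    intro i _
    rw [show c + t • y i - a i = (c - a i) + t • y i by abel, norm_add_sq_real, inner_smul_right,
      norm_smul, mul_pow, Real.norm_eq_abs, sq_abs, inner_sub_left]
    ring
  rw [Finset.sum_congr rfl h, Finset.sum_add_distrib, Finset.sum_sub_distrib,
    Finset.sum_add_distrib, ← Finset.mul_sum, ← Finset.mul_sum, ← Finset.mul_sum, ← inner_sum, hy,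
    inner_zero_right]
  ring

lemma son_first_order {n : ℕ} (C : Finset (Fin n)) (a x : Fin n → E) (lam : ℝ) (hlam : 0 < lam)
    (xhat : E) (hin : ∀ i ∈ C, x i = xhat) (hout : ∀ i ∉ C, x i ≠ xhat)
    (hmin : ∀ p, sonPart C a lam x x ≤ sonPart C a lam x p)
    (y : Fin n → E) (hy : ∑ i ∈ C, y i = 0) :
    ∑ i ∈ C, inner ℝ (a i) (y i) ≤ lam * ((1 / 2) * ∑ i ∈ C, ∑ j ∈ C, ‖y i - y j‖) := by
  set K : ℝ := ∑ j ∈ Cᶜ, ∑ i ∈ C, ‖y i‖ ^ 2 / (2 * ‖xhat - x j‖) with hK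
  have hK0 : 0 ≤ K := by rw [hK]; positivity
  set S : ℝ := ∑ i ∈ C, ‖y i‖ ^ 2 with hS
  have hS0 : 0 ≤ S := by rw [hS]; positivity
  set A : ℝ := ∑ i ∈ C, inner ℝ (a i) (y i) with hA
  set P : ℝ := ∑ i ∈ C, ∑ j ∈ C, ‖y i - y j‖ with hP
  have main : ∀ t : ℝ, 0 < t → 0 ≤ t * (lam * ((1 / 2) * P) - A) + t ^ 2 * (S / 2 + lam * K) := by
    intro t ht
    have h := hmin (fun i => xhat + t • y i)
    unfold sonPart at h
    have q := son_quad C a y xhat t hy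
    have r1 : ∑ i ∈ C, ‖x i - a i‖ ^ 2 = ∑ i ∈ C, ‖xhat - a i‖ ^ 2 :=
      Finset.sum_congr rfl fun i hi => by rw [hin i hi]
    have r2 : ∑ i ∈ C, ∑ j ∈ C, ‖x i - x j‖ = 0 :=
      Finset.sum_eq_zero fun i hi => Finset.sum_eq_zero fun j hj => by
        rw [hin i hi, hin j hj, sub_self, norm_zero]
    have r3 : ∑ i ∈ C, ∑ j ∈ C, ‖xhat + t • y i - (xhat + t • y j)‖ = t * P := by
      rw [hP, Finset.mul_sum]
      refine Finset.sum_congr rfl fun i _ => ?_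
      rw [Finset.mul_sum]
      refine Finset.sum_congr rfl fun j _ => ?_
      rw [add_sub_add_left_eq_sub, ← smul_sub, norm_smul, Real.norm_eq_abs, abs_of_pos ht]
    have r4 : ∑ j ∈ Cᶜ, ∑ i ∈ C, ‖xhat + t • y i - x j‖
        ≤ ∑ j ∈ Cᶜ, ∑ i ∈ C, ‖x i - x j‖ + t ^ 2 * K := by
      rw [hK, Finset.mul_sum, ← Finset.sum_add_distrib]
      refine Finset.sum_le_sum fun j hj => ?_
      have hv : xhat - x j ≠ 0 := sub_ne_zero.2 (hout j (Finset.mem_compl.1 hj)).symm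
      have z : ∑ i ∈ C, t * (inner ℝ (xhat - x j) (y i) / ‖xhat - x j‖) = 0 := by
        rw [← Finset.mul_sum, ← Finset.sum_div, ← inner_sum, hy, inner_zero_right]
        simp
      calc ∑ i ∈ C, ‖xhat + t • y i - x j‖
          ≤ ∑ i ∈ C, (‖x i - x j‖ + t * (inner ℝ (xhat - x j) (y i) / ‖xhat - x j‖)
            + t ^ 2 * (‖y i‖ ^ 2 / (2 * ‖xhat - x j‖))) := by
            refine Finset.sum_le_sum fun i hi => ?_
            rw [hin i hi, show xhat + t • y i - x j = (xhat - x j) + t • y i by abel]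
            exact norm_add_smul_le _ _ _ hv
        _ = _ := by
            rw [Finset.sum_add_distrib, Finset.sum_add_distrib, z, ← Finset.mul_sum, add_zero]
    have r5 := mul_le_mul_of_nonneg_left r4 hlam.le
    rw [r1, r2, r3, q] at h
    linarith
  by_contra hcon
  push Not at hcon
  set δ : ℝ := A - lam * ((1 / 2) * P) with hδ
  have hδ0 : 0 < δ := by linarith
  set M : ℝ := S / 2 + lam * K with hM
  have hM0 : 0 ≤ M := by positivity
  have ht : 0 < δ / (M + 1) := by positivity
  have h := main _ ht
  have e : δ / (M + 1) * (lam * ((1 / 2) * P) - A) + (δ / (M + 1)) ^ 2 * M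
      = - (δ / (M + 1)) ^ 2 := by
    rw [show lam * ((1 / 2) * P) - A = -δ by rw [hδ]; ring]
    field_simp
    ring
  rw [e] at h
  have := pow_pos ht 2
  linarith

end helpers

/-- Agglomeration property (Chiquet et al.): if `C` is exactly one cluster of the
minimizer at parameter `λ`, then the points of `C` remain together in one cluster of the
minimizer at any parameter `λ̄ ≥ λ`. -/
theorem agglomeration_property
    (d n : ℕ) (a : Fin n → EuclideanSpace ℝ (Fin d)) (lam lambar : ℝ)
    (hlam : 0 < lam) (hle : lam ≤ lambar)
    (x xbar : Fin n → EuclideanSpace ℝ (Fin d))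
    (hx : ∀ y : Fin n → EuclideanSpace ℝ (Fin d), sonObjective a lam x ≤ sonObjective a lam y)
    (hxbar : ∀ y : Fin n → EuclideanSpace ℝ (Fin d),
      sonObjective a lambar xbar ≤ sonObjective a lambar y)
    (C : Finset (Fin n)) (xhat : EuclideanSpace ℝ (Fin d))
    (hin : ∀ i ∈ C, x i = xhat) (hout : ∀ i ∉ C, x i ≠ xhat) :
    ∃ xhat' : EuclideanSpace ℝ (Fin d), ∀ i ∈ C, xbar i = xhat' := by
  rcases C.eq_empty_or_nonempty with rfl | hC
  · exact ⟨0, by simp⟩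
  have hc : (C.card : ℝ) ≠ 0 := by exact_mod_cast hC.card_ne_zero
  set m : EuclideanSpace ℝ (Fin d) := (C.card : ℝ)⁻¹ • ∑ i ∈ C, xbar i with hm
  have hcm : (C.card : ℝ) • m = ∑ i ∈ C, xbar i := by rw [hm, smul_inv_smul₀ hc]
  refine ⟨m, ?_⟩
  have hlb : 0 < lambar := lt_of_lt_of_le hlam hle
  have hy : ∑ i ∈ C, (xbar i - m) = 0 := by
    rw [Finset.sum_sub_distrib, Finset.sum_const, ← hcm, ← Nat.cast_smul_eq_nsmul ℝ, sub_self]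
  have h1 := son_first_order C a x lam hlam xhat hin hout
    (fun p => sonPart_min C a lam x p hx) (fun i => xbar i - m) hy
  have h2 := sonPart_min C a lambar xbar (fun _ => m) hxbar
  have q := son_quad C a (fun i => xbar i - m) m 1 hy
  unfold sonPart at h2
  simp only [one_smul, add_sub_cancel, sub_sub_sub_cancel_right, sub_self, norm_zero,
    Finset.sum_const_zero] at h1 h2 q
  have h3 : ∑ j ∈ Cᶜ, ∑ i ∈ C, ‖m - xbar j‖ ≤ ∑ j ∈ Cᶜ, ∑ i ∈ C, ‖xbar i - xbar j‖ := by
    refine Finset.sum_le_sum fun j _ => ?_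
    have e : ∑ i ∈ C, (xbar i - xbar j) = (C.card : ℝ) • (m - xbar j) := by
      rw [Finset.sum_sub_distrib, Finset.sum_const, ← hcm, ← Nat.cast_smul_eq_nsmul ℝ, smul_sub]
    have e2 := norm_sum_le C (fun i => xbar i - xbar j)
    rw [e, norm_smul] at e2
    simpa using e2
  have h4 := mul_le_mul_of_nonneg_left h3 hlb.le
  have hP : 0 ≤ ∑ i ∈ C, ∑ j ∈ C, ‖xbar i - xbar j‖ := by positivity
  have h5 := mul_le_mul_of_nonneg_right hle hP
  have hS : ∑ i ∈ C, ‖xbar i - m‖ ^ 2 ≤ 0 := by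
    rw [q] at h2
    linarith
  have hS' := le_antisymm hS (Finset.sum_nonneg fun i _ => by positivity)
  intro i hi
  have h6 := (Finset.sum_eq_zero_iff_of_nonneg (fun i _ => by positivity)).1 hS' i hi
  exact sub_eq_zero.1 (norm_eq_zero.1 (pow_eq_zero_iff two_ne_zero |>.1 h6))
end
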